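/- Let M₁, …, M_k be matroids on a common finite ground set V, let C be the complex of their common independent sets, and let λ > 0. Then the following are equivalent: (1) the intersection of the polytopes P(M_i) is contained in λ·P(C); (2) for every h : V → ℝ≥0 one has χ*(C, h) ≤ λ · max_i χ*(M_i, h). -/

import Mathlib

/-- Matroid axioms for a family of finsets. -/
def IsMatroid {V : Type*} [DecidableEq V] (M : Set (Finset V)) : Prop :=
  (∅ : Finset V) ∈ M ∧ (∀ S ∈ M, ∀ T, T ⊆ S → T ∈ M) ∧
  ∀ S ∈ M, ∀ T ∈ M, S.card < T.card → ∃ v ∈ T \ S, insert v S ∈ M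

/-- The fractional `h`-chromatic number of a complex `C`. -/
noncomputable def fracChrom {V : Type*} [Fintype V] [DecidableEq V]
    (C : Set (Finset V)) (h : V → ℝ) : ℝ :=
  sInf {t : ℝ | ∃ f : Finset V → ℝ, (∀ S, 0 ≤ f S) ∧ (∀ S, S ∉ C → f S = 0) ∧
    (∀ v : V, h v ≤ ∑ S : Finset V, if v ∈ S then f S else 0) ∧ t = ∑ S : Finset V, f S}

/-- `P(C)`: convex hull of indicator vectors of faces. -/
noncomputable def polytopeP {V : Type*} [Fintype V] [DecidableEq V]
    (C : Set (Finset V)) : Set (V → ℝ) :=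
  convexHull ℝ {x : V → ℝ | ∃ S ∈ C, x = fun v => if v ∈ S then (1 : ℝ) else 0}

/-- The value set of the linear program defining `fracChrom`. -/
def coloringValues {V : Type*} [Fintype V] [DecidableEq V]
    (C : Set (Finset V)) (h : V → ℝ) : Set ℝ :=
  {t : ℝ | ∃ f : Finset V → ℝ, (∀ S, 0 ≤ f S) ∧ (∀ S, S ∉ C → f S = 0) ∧
    (∀ v : V, h v ≤ ∑ S : Finset V, if v ∈ S then f S else 0) ∧ t = ∑ S : Finset V, f S}

section

variable {V : Type*} [Fintype V] [DecidableEq V] {C : Set (Finset V)} {h : V → ℝ}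

theorem fracChrom_eq_sInf_coloringValues : fracChrom C h = sInf (coloringValues C h) := rfl

theorem nonneg_of_mem_coloringValues {t : ℝ} (ht : t ∈ coloringValues C h) : 0 ≤ t := by
  obtain ⟨f, hf, -, -, rfl⟩ := ht
  exact Finset.sum_nonneg fun S _ => hf S

theorem bddBelow_coloringValues : BddBelow (coloringValues C h) :=
  ⟨0, fun _ => nonneg_of_mem_coloringValues⟩

theorem fracChrom_nonneg : 0 ≤ fracChrom C h :=
  Real.sInf_nonneg fun _ => nonneg_of_mem_coloringValues

theorem indicator_mem_polytopeP {S : Finset V} (hS : S ∈ C) :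
    (fun v => if v ∈ S then (1 : ℝ) else 0) ∈ polytopeP C :=
  subset_convexHull _ _ ⟨S, hS, rfl⟩

theorem zero_mem_polytopeP (hC : ∅ ∈ C) : (0 : V → ℝ) ∈ polytopeP C := by
  simpa using! indicator_mem_polytopeP hC

theorem isClosed_polytopeP : IsClosed (polytopeP C) := by
  refine Set.Finite.isClosed_convexHull (𝕜 := ℝ) ?_
  refine (Set.finite_range fun S : Finset V => fun v => if v ∈ S then (1 : ℝ) else 0).subset ?_
  rintro x ⟨S, -, rfl⟩
  exact ⟨S, rfl⟩

theorem nonneg_of_mem_polytopeP {x : V → ℝ} (hx : x ∈ polytopeP C) : 0 ≤ x := by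
  refine convexHull_min (t := Set.Ici 0) ?_ (convex_Ici 0) hx
  rintro x ⟨S, -, rfl⟩ v
  dsimp
  split_ifs <;> norm_num

theorem mul_mem_polytopeP (hC : IsLowerSet C) {a y : V → ℝ} (ha : a ∈ Set.Icc 0 1)
    (hy : y ∈ polytopeP C) : a * y ∈ polytopeP C := by
  refine convexHull_min (t := LinearMap.mulLeft ℝ a ⁻¹' polytopeP C) ?_
    ((convex_convexHull ℝ _).linear_preimage _) hy
  rintro _ ⟨S, hS, rfl⟩
  have ha' : a ∈ convexHull ℝ (Set.pi Set.univ fun _ : V => ({0, 1} : Set ℝ)) := by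
    rw [convexHull_pi]
    intro v _
    rw [convexHull_pair, segment_eq_Icc zero_le_one]
    exact ⟨ha.1 v, ha.2 v⟩
  refine convexHull_min (t := LinearMap.mulRight ℝ (fun v => if v ∈ S then (1 : ℝ) else 0) ⁻¹'
    polytopeP C) ?_ ((convex_convexHull ℝ _).linear_preimage _) ha'
  intro b hb
  have hT : S.filter (fun v => b v = 1) ∈ C := hC (Finset.filter_subset _ S) hS
  rw [Set.mem_preimage, LinearMap.mulRight_apply]
  convert indicator_mem_polytopeP hT using 1
  ext v
  rcases hb v (Set.mem_univ v) with h0 | h1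
  · simp [h0]
  · simp [Set.mem_singleton_iff.1 h1]

theorem mem_polytopeP_of_le (hC : IsLowerSet C) {x y : V → ℝ} (hx : 0 ≤ x) (hxy : x ≤ y)
    (hy : y ∈ polytopeP C) : x ∈ polytopeP C := by
  convert mul_mem_polytopeP hC (a := x / y) ⟨fun v => ?_, fun v => ?_⟩ hy using 1
  · ext v
    by_cases hv : y v = 0
    · have hxv : x v = 0 := le_antisymm (hv ▸ hxy v) (hx v)
      simp [hxv]
    · simp [hv]
  · exact div_nonneg (hx v) ((hx v).trans (hxy v))
  · exact div_le_one_of_le₀ (hxy v) ((hx v).trans (hxy v))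

theorem smul_mem_polytopeP_of_mem_coloringValues (hC : IsLowerSet C) (hne : ∅ ∈ C) (hh : 0 ≤ h)
    {s t : ℝ} (hs : 0 < s) (ht : t ∈ coloringValues C h) (hts : t ≤ s) :
    s⁻¹ • h ∈ polytopeP C := by
  classical
  obtain ⟨f, hf, hfC, hcov, rfl⟩ := ht
  set w : Finset V → ℝ := f + Pi.single ∅ (s - ∑ S, f S) with hw
  have hfw : f ≤ w := le_add_of_nonneg_right (Pi.single_nonneg.2 (sub_nonneg.2 hts))
  have hwC : ∀ S, S ∉ C → w S = 0 := fun S hS => by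
    have hS0 : S ≠ ∅ := fun h0 => hS (h0 ▸ hne)
    simp [hw, hfC S hS, hS0]
  have hws : ∑ S, w S = s := by simp [hw, Finset.sum_add_distrib]
  have hmem : ∑ S : Finset V, (s⁻¹ * w S) •
      (if S ∈ C then (fun v => if v ∈ S then (1 : ℝ) else 0) else 0) ∈ polytopeP C := by
    refine (convex_convexHull ℝ _).sum_mem (fun S _ => ?_) ?_ fun S _ => ?_
    · exact mul_nonneg (inv_nonneg.2 hs.le) ((hf S).trans (hfw S))
    · rw [← Finset.mul_sum, hws, inv_mul_cancel₀ hs.ne']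
    · split_ifs with hS
      · exact indicator_mem_polytopeP hS
      · exact zero_mem_polytopeP hne
  refine mem_polytopeP_of_le hC (smul_nonneg (by positivity) hh) (fun v => ?_) hmem
  simp only [Pi.smul_apply, Finset.sum_apply, smul_eq_mul, mul_assoc, ← Finset.mul_sum]
  refine mul_le_mul_of_nonneg_left ((hcov v).trans ?_) (by positivity)
  refine Finset.sum_le_sum fun S _ => ?_
  by_cases hS : S ∈ C
  · by_cases hv : v ∈ S <;> simp [hS, hv, hfw S]
  · simp [hS, hfC S hS]

theorem one_mem_coloringValues {x : V → ℝ} (hx : x ∈ polytopeP C) :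
    (1 : ℝ) ∈ coloringValues C x := by
  have hsub : polytopeP C ⊆ (fun f : Finset V → ℝ => fun v => ∑ S, if v ∈ S then f S else 0) ''
      {f | (∀ S, 0 ≤ f S) ∧ (∀ S, S ∉ C → f S = 0) ∧ ∑ S, f S = 1} := by
    refine convexHull_min ?_ ?_
    · rintro _ ⟨S, hS, rfl⟩
      refine ⟨Pi.single S 1, ⟨fun T => ?_, fun T hT => ?_, ?_⟩, ?_⟩
      · by_cases hTS : T = S <;> simp [hTS]
      · rw [Pi.single_eq_of_ne]
        rintro rfl
        exact hT hS
      · simp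
      · ext v
        simp only
        rw [Finset.sum_eq_single S (fun T _ hT => by simp [hT]) (by simp)]
        simp
    · rintro _ ⟨f, ⟨hf, hfC, hf1⟩, rfl⟩ _ ⟨g, ⟨hg, hgC, hg1⟩, rfl⟩ a b ha hb hab
      refine ⟨a • f + b • g, ⟨fun S => ?_, fun S hS => ?_, ?_⟩, ?_⟩
      · have := hf S
        have := hg S
        simp only [Pi.add_apply, Pi.smul_apply, smul_eq_mul]
        positivity
      · simp [hfC S hS, hgC S hS]
      · simp [Finset.sum_add_distrib, ← Finset.mul_sum, hf1, hg1, hab]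
      · ext v
        simp only [Pi.add_apply, Pi.smul_apply, smul_eq_mul, Finset.mul_sum,
          ← Finset.sum_add_distrib]
        refine Finset.sum_congr rfl fun S _ => ?_
        split_ifs <;> simp
  obtain ⟨f, ⟨hf, hfC, hf1⟩, rfl⟩ := hsub hx
  exact ⟨f, hf, hfC, fun v => le_rfl, hf1.symm⟩

theorem smul_mem_coloringValues {s t : ℝ} (hs : 0 ≤ s) (ht : t ∈ coloringValues C h) :
    s * t ∈ coloringValues C (s • h) := by
  obtain ⟨f, hf, hfC, hcov, rfl⟩ := ht
  refine ⟨s • f, fun S => mul_nonneg hs (hf S), fun S hS => by simp [hfC S hS], fun v => ?_, ?_⟩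
  · have := mul_le_mul_of_nonneg_left (hcov v) hs
    simpa [Finset.mul_sum] using this
  · simp [Finset.mul_sum]

theorem fracChrom_le_of_smul_mem {s : ℝ} (hs : 0 < s) (hx : s⁻¹ • h ∈ polytopeP C) :
    fracChrom C h ≤ s := by
  have := smul_mem_coloringValues hs.le (one_mem_coloringValues hx)
  rw [smul_inv_smul₀ hs.ne', mul_one] at this
  exact csInf_le bddBelow_coloringValues this

theorem smul_mem_of_fracChrom_le (hC : IsLowerSet C) (hC0 : ∅ ∈ C) (hh : 0 ≤ h)
    (hne : (coloringValues C h).Nonempty) {s : ℝ} (hs : 0 < s) (hle : fracChrom C h ≤ s) :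
    s⁻¹ • h ∈ polytopeP C := by
  have hlim : Filter.Tendsto (fun r : ℝ => r⁻¹ • h) (nhdsWithin s (Set.Ioi s))
      (nhds (s⁻¹ • h)) :=
    ((tendsto_inv₀ hs.ne').smul_const h).mono_left nhdsWithin_le_nhds
  refine isClosed_polytopeP.mem_of_tendsto hlim ?_
  filter_upwards [self_mem_nhdsWithin] with r hr
  obtain ⟨t, ht, htr⟩ := exists_lt_of_csInf_lt hne (hle.trans_lt hr)
  exact smul_mem_polytopeP_of_mem_coloringValues hC hC0 hh (hs.trans hr) ht htr.le

theorem coloringValues_nonempty (hsing : ∀ v, 0 < h v → {v} ∈ C) :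
    (coloringValues C h).Nonempty := by
  classical
  refine ⟨_, fun S => if S ∈ C then ∑ v, |h v| else 0, fun S => ?_, fun S hS => by simp [hS],
    fun v => ?_, rfl⟩
  · dsimp
    split_ifs
    · positivity
    · exact le_rfl
  · have hnn : ∀ S : Finset V, 0 ≤ if v ∈ S then (if S ∈ C then ∑ v, |h v| else 0) else 0 := by
      intro S
      split_ifs <;> positivity
    by_cases hv : 0 < h v
    · refine le_trans ?_ (Finset.single_le_sum (fun S _ => hnn S) (Finset.mem_univ {v}))
      simp only [Finset.mem_singleton, if_true, hsing v hv]
      exact (le_abs_self _).trans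
        (Finset.single_le_sum (f := fun v => |h v|) (fun _ _ => abs_nonneg _) (Finset.mem_univ v))
    · exact (not_lt.1 hv).trans (Finset.sum_nonneg fun S _ => hnn S)

theorem singleton_mem_of_coloringValues_nonempty (hC : IsLowerSet C)
    (hne : (coloringValues C h).Nonempty) {v : V} (hv : 0 < h v) : {v} ∈ C := by
  obtain ⟨_, f, hf, hfC, hcov, -⟩ := hne
  by_contra hvC
  refine (hv.trans_le (hcov v)).ne' (Finset.sum_eq_zero fun S _ => ?_)
  split_ifs with hvS
  · exact hfC S fun hS => hvC (hC (Finset.singleton_subset_iff.2 hvS) hS)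
  · rfl

theorem polytopeP_iInter_subset_iff {ι : Type*} [Finite ι] [Nonempty ι]
    {M : ι → Set (Finset V)} (hM : ∀ i, IsLowerSet (M i)) (hM0 : ∀ i, ∅ ∈ M i)
    {lam : ℝ} (hlam : 0 < lam) :
    ((⋂ i, polytopeP (M i)) ⊆ (fun y => lam • y) '' polytopeP {S | ∀ i, S ∈ M i}) ↔
    (∀ h : V → ℝ, (∀ v, 0 ≤ h v) →
      fracChrom {S | ∀ i, S ∈ M i} h ≤ lam * ⨆ i, fracChrom (M i) h) := by
  have hC : IsLowerSet {S | ∀ i, S ∈ M i} := fun S T hTS hS i => hM i hTS (hS i)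
  have hC0 : ∅ ∈ {S | ∀ i, S ∈ M i} := hM0
  constructor
  · intro hsub h hh
    have hle : ∀ i, fracChrom (M i) h ≤ ⨆ i, fracChrom (M i) h :=
      le_ciSup (Set.finite_range _).bddAbove
    have hsup : 0 ≤ ⨆ i, fracChrom (M i) h := Real.iSup_nonneg fun i => fracChrom_nonneg
    rcases (coloringValues {S | ∀ i, S ∈ M i} h).eq_empty_or_nonempty with he | hne
    · rw [fracChrom_eq_sInf_coloringValues, he, Real.sInf_empty]
      positivity
    have hneM : ∀ i, (coloringValues (M i) h).Nonempty := fun i =>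
      coloringValues_nonempty fun v hv => singleton_mem_of_coloringValues_nonempty hC hne hv i
    refine le_of_forall_gt_imp_ge_of_dense fun r hr => ?_
    have hr0 : 0 < r := (mul_nonneg hlam.le hsup).trans_lt hr
    have hr' : (⨆ i, fracChrom (M i) h) ≤ r / lam := by
      rw [le_div_iff₀ hlam, mul_comm]
      exact hr.le
    obtain ⟨y, hy, hyx⟩ := hsub (Set.mem_iInter.2 fun i =>
      smul_mem_of_fracChrom_le (hM i) (hM0 i) hh (hneM i) (div_pos hr0 hlam) ((hle i).trans hr'))
    refine fracChrom_le_of_smul_mem hr0 ?_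
    convert hy using 1
    rw [← inv_smul_smul₀ hlam.ne' y]
    dsimp only at hyx
    rw [hyx, smul_smul]
    congr 1
    field_simp
  · intro hchrom x hx
    rw [Set.mem_iInter] at hx
    have hx0 : 0 ≤ x := nonneg_of_mem_polytopeP (hx (Classical.arbitrary ι))
    have hne : (coloringValues {S | ∀ i, S ∈ M i} x).Nonempty :=
      coloringValues_nonempty fun v hv i =>
        singleton_mem_of_coloringValues_nonempty (hM i) ⟨1, one_mem_coloringValues (hx i)⟩ hv
    have hle : fracChrom {S | ∀ i, S ∈ M i} x ≤ lam := by
      refine (hchrom x hx0).trans (mul_le_of_le_one_right hlam.le (ciSup_le fun i => ?_))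
      exact fracChrom_le_of_smul_mem one_pos (by simpa using hx i)
    exact ⟨_, smul_mem_of_fracChrom_le hC hC0 hx0 hne hlam hle, smul_inv_smul₀ hlam.ne' x⟩

end

/-- For matroids `M₁, …, M_k` with common independence complex `C` and
`λ > 0`, we have `⋂ᵢ P(Mᵢ) ⊆ λ·P(C)` if and only if for every `h : V → ℝ≥0`,
`χ*(C,h) ≤ λ · maxᵢ χ*(Mᵢ,h)`. -/
theorem stmt_8 {V : Type*} [Fintype V] [DecidableEq V] (k : ℕ) (hk : 0 < k)
    (M : Fin k → Set (Finset V)) (hM : ∀ i, IsMatroid (M i))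
    (lam : ℝ) (hlam : 0 < lam) :
    ((⋂ i, polytopeP (M i)) ⊆ (fun y => lam • y) '' polytopeP {S | ∀ i, S ∈ M i}) ↔
    (∀ h : V → ℝ, (∀ v, 0 ≤ h v) →
      fracChrom {S | ∀ i, S ∈ M i} h ≤ lam * ⨆ i, fracChrom (M i) h) := by
  have : Nonempty (Fin k) := ⟨⟨0, hk⟩⟩
  exact polytopeP_iInter_subset_iff (fun i S T hTS hS => (hM i).2.1 S hS T hTS)
    (fun i => (hM i).1) hlam
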